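/- arXiv:2305.09796 — 2 statements merged into one kernel-verified Lean document; each statement's English description precedes it below -/
import Mathlib

section
/- Let (D,V) be a Dyer system of spherical type. Then the multiplication map D_2 × D_p × D_∞ → D is a group isomorphism; moreover D_p is isomorphic to the direct product Π_{x∈V_p} ℤ/f(x)ℤ (in particular D_p is a finite abelian group), and D_∞ is isomorphic to the free abelian group ℤ^l where l = |V_∞|. -/
/-!
The graph is complete, and an edge with label `≠ 2` has both endpoints in `V_2`, so the
generators of the three classes `V_2`, `V_p`, `V_∞` commute with those of the other classes, and those
of `V_p ∪ V_∞` commute with each other. Hence multiplication `D_2 × D_p × D_∞ → D` is a homomorphism,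
and it is onto because its image contains every generator.

For injectivity, if `X` is a set of vertices that contains `V_2` or is disjoint from it, killing the
generators outside `X` respects the relations, and gives a retraction of `D` onto `D_X`
(`exists_retraction`). The retractions for the three classes read off the three factors.

If `X` is disjoint from `V_2`, sending `x ∈ X` to the standard generator of the factor `ℤ/f(x)` and
all other vertices to `1` defines a homomorphism `D → ∏_{x ∈ X} ℤ/f(x)`, where `ℤ/∞` means `ℤ`. It is
a left inverse of the map `∏_{x ∈ X} ℤ/f(x) → D` given by the commuting generators, whose image is
`D_X` (`closure_equiv_pi_zmod`). With the conventions `(⊤ : ℕ∞).toNat = 0` and `ZMod 0 = ℤ`, the same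
statement serves `D_p` and `D_∞`.
-/

open scoped Classical

/-- The word length of `g` with respect to the alphabet `S ∪ S⁻¹`. -/
noncomputable def wordLength {G : Type*} [Group G] (S : Set G) (g : G) : ℕ :=
  sInf {n | ∃ w : List G, w.length = n ∧ (∀ a ∈ w, a ∈ S ∪ S⁻¹) ∧ w.prod = g}

/-- The syllable length of `g` with respect to `S`. -/
noncomputable def sylLength {G : Type*} [Group G] (S : Set G) (g : G) : ℕ :=
  sInf {n | ∃ w : List (G × ℤ), w.length = n ∧ (∀ p ∈ w, p.1 ∈ S) ∧
    (w.map fun p => p.1 ^ p.2).prod = g}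

/-- The growth series of a subset `A` of a group `G` with respect to a generating set `S`:
the coefficient of `t^n` is the number of elements of `A` of word length `n`. -/
noncomputable def growthSeries {G : Type*} [Group G] (S : Set G) (A : Set G) :
    PowerSeries ℤ :=
  PowerSeries.mk fun n => (Set.ncard {g ∈ A | wordLength S g = n} : ℤ)

/-- A Dyer graph. -/
structure DyerGraph (V : Type*) where
  Adj : V → V → Prop
  symm : ∀ {x y}, Adj x y → Adj y x
  loopless : ∀ x, ¬ Adj x x
  m : V → V → ℕ
  m_symm : ∀ x y, m x y = m y x
  m_ge : ∀ {x y}, Adj x y → 2 ≤ m x y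
  f : V → ℕ∞
  f_ge : ∀ x, 2 ≤ f x
  compat : ∀ {x y}, Adj x y → m x y ≠ 2 → f x = 2 ∧ f y = 2

namespace DyerGraph

variable {V : Type*} (Γ : DyerGraph V)

/-- The alternating word `π(x, y, n) = xyxy⋯` of length `n` in the free group. -/
def altWord (x y : V) : ℕ → FreeGroup V
  | 0 => 1
  | n + 1 => FreeGroup.of x * altWord y x n

/-- The defining relations of the Dyer group. -/
def rels : Set (FreeGroup V) :=
  {r | ∃ x : V, Γ.f x ≠ ⊤ ∧ r = FreeGroup.of x ^ (Γ.f x).toNat} ∪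
  {r | ∃ x y : V, Γ.Adj x y ∧
      r = altWord x y (Γ.m x y) * (altWord y x (Γ.m x y))⁻¹}

/-- The Dyer group associated to a Dyer graph. -/
abbrev DyerGroup := PresentedGroup Γ.rels

/-- The standard generator of the Dyer group corresponding to a vertex. -/
def gen (x : V) : Γ.DyerGroup := PresentedGroup.of x

/-- The standard parabolic subgroup generated by `X ⊆ V`. -/
def parabolic (X : Set V) : Subgroup Γ.DyerGroup := Subgroup.closure (Γ.gen '' X)

/-- The set of vertices with `f x = 2`. -/
def V2 : Set V := {x | Γ.f x = 2}

/-- The set of vertices with `2 < f x < ∞`. -/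
def Vp : Set V := {x | 2 < Γ.f x ∧ Γ.f x ≠ ⊤}

/-- The set of vertices with `f x = ∞`. -/
def Vinf : Set V := {x | Γ.f x = ⊤}

/-- A Dyer group is of spherical type if the graph is complete and `D_2` is finite. -/
def Spherical : Prop :=
  (∀ x y : V, x ≠ y → Γ.Adj x y) ∧ (Γ.parabolic Γ.V2 : Set Γ.DyerGroup).Finite

/-- The set `A_X` of `X`-minimal elements. -/
def Amin (X : Set V) : Set Γ.DyerGroup :=
  {g | ∀ h ∈ Γ.parabolic X,
    sylLength (Set.range Γ.gen) g ≤ sylLength (Set.range Γ.gen) (g * h)}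

/-- The set `B_X = A_X ∖ ⋃_{X ⊊ Y} A_Y`. -/
def Bmin (X : Set V) : Set Γ.DyerGroup :=
  Γ.Amin X \ ⋃ (Y : Set V) (_ : X ⊂ Y), Γ.Amin Y

end DyerGraph

/-- If commuting elements `g i` with `g i ^ n i = 1` are mapped by some homomorphism to the standard
generators of `∏ ℤ/n i`, then they generate a copy of `∏ ℤ/n i`. The value `n i = 0` is allowed and
contributes a factor `ℤ`. -/
theorem closure_equiv_pi_zmod {G ι : Type*} [Group G] [Fintype ι] [DecidableEq ι]
    (n : ι → ℕ) (g : ι → G)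
    (hc : ∀ i j, Commute (g i) (g j)) (hn : ∀ i, g i ^ n i = 1)
    (φ : G →* ∀ i, Multiplicative (ZMod (n i)))
    (hφ : ∀ i, φ (g i) = Pi.mulSingle i (Multiplicative.ofAdd 1)) :
    Nonempty (Subgroup.closure (Set.range g) ≃* ∀ i, Multiplicative (ZMod (n i))) := by
  -- Each `g i` defines a homomorphism out of `ℤ/n i`.
  have hpow : ∀ i, ∃ θ : Multiplicative (ZMod (n i)) →* G,
      ∀ k : ℤ, θ (Multiplicative.ofAdd (k : ZMod (n i))) = g i ^ k := by
    intro i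
    refine ⟨AddMonoidHom.toMultiplicativeLeft (ZMod.lift (n i)
      ⟨zmultiplesHom (Additive G) (Additive.ofMul (g i)), ?_⟩), fun k => ?_⟩
    · rw [zmultiplesHom_apply, natCast_zsmul, ← ofMul_pow, hn i, ofMul_one]
    · simp
  choose θ hθ using hpow
  have hθ1 : ∀ i, θ i (Multiplicative.ofAdd 1) = g i := fun i => by
    simpa using hθ i 1
  have hsurj : ∀ i (a : Multiplicative (ZMod (n i))),
      ∃ k : ℤ, a = Multiplicative.ofAdd 1 ^ k := by
    intro i a
    obtain ⟨k, hk⟩ := ZMod.intCast_surjective a.toAdd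
    refine ⟨k, ?_⟩
    rw [← ofAdd_zsmul, zsmul_one, hk, ofAdd_toAdd]
  have hcomm : Pairwise fun i j => ∀ x y, Commute (θ i x) (θ j y) := by
    intro i j _ x y
    obtain ⟨k, rfl⟩ := hsurj i x
    obtain ⟨l, rfl⟩ := hsurj j y
    rw [map_zpow, map_zpow, hθ1, hθ1]
    exact (hc i j).zpow_zpow k l
  let ψ : (∀ i, Multiplicative (ZMod (n i))) →* G := MonoidHom.noncommPiCoprod θ hcomm
  have hid : φ.comp ψ = MonoidHom.id _ := by
    refine MonoidHom.pi_ext fun i a => ?_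
    obtain ⟨k, rfl⟩ := hsurj i a
    have h1 : ψ (Pi.mulSingle i (Multiplicative.ofAdd 1)) = g i := by
      rw [← hθ1 i]
      exact MonoidHom.noncommPiCoprod_mulSingle θ i _
    rw [Pi.mulSingle_zpow, map_zpow, map_zpow, MonoidHom.comp_apply, h1, hφ]
    rfl
  have hinj : Function.Injective ψ := by
    intro a b hab
    have h2 := congrArg φ hab
    rwa [← MonoidHom.comp_apply, ← MonoidHom.comp_apply, hid] at h2
  have hrange : ψ.range = Subgroup.closure (Set.range g) := by
    rw [MonoidHom.noncommPiCoprod_range]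
    apply le_antisymm
    · refine iSup_le fun i => ?_
      rintro _ ⟨a, rfl⟩
      obtain ⟨k, rfl⟩ := hsurj i a
      rw [map_zpow, hθ1]
      exact Subgroup.zpow_mem _ (Subgroup.subset_closure (Set.mem_range_self i)) k
    · rw [Subgroup.closure_le]
      rintro _ ⟨i, rfl⟩
      exact le_iSup (fun j => (θ j).range) i ⟨Multiplicative.ofAdd 1, hθ1 i⟩
  exact ⟨((MonoidHom.ofInjective hinj).trans (MulEquiv.subgroupCongr hrange)).symm⟩

namespace DyerGraph

theorem lift_altWord_congr {V H : Type*} [Group H] {u v : V → H} {x y : V}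
    (hx : u x = v x) (hy : u y = v y) (n : ℕ) :
    FreeGroup.lift u (altWord x y n) = FreeGroup.lift v (altWord x y n) := by
  induction n generalizing x y with
  | zero => simp [altWord]
  | succ n ih => simp [altWord, hx, ih hy hx]

theorem lift_altWord_comm_of_eq_one {V H : Type*} [Group H] {u : V → H} {x y : V}
    (hx : u x = 1) (hy : u y = 1) (n : ℕ) :
    FreeGroup.lift u (altWord x y n) = FreeGroup.lift u (altWord y x n) := by
  have h1 : FreeGroup.lift (1 : V → H) = 1 := by
    ext z
    simp
  rw [lift_altWord_congr (v := 1) hx hy, lift_altWord_congr (u := u) (v := 1) hy hx, h1]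
  rfl

theorem gen_pow {V : Type*} (Γ : DyerGraph V) (x : V) : Γ.gen x ^ (Γ.f x).toNat = 1 := by
  by_cases hx : Γ.f x = ⊤
  · simp [hx]
  · have := PresentedGroup.one_of_mem (rels := Γ.rels)
      (x := FreeGroup.of x ^ (Γ.f x).toNat) (Or.inl ⟨x, hx, rfl⟩)
    rwa [map_pow] at this

theorem lift_gen_altWord {V : Type*} (Γ : DyerGraph V) {x y : V} (hxy : Γ.Adj x y) :
    FreeGroup.lift Γ.gen (altWord x y (Γ.m x y)) =
      FreeGroup.lift Γ.gen (altWord y x (Γ.m x y)) := by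
  have hl : FreeGroup.lift Γ.gen = PresentedGroup.mk Γ.rels := by
    ext z
    simp [gen, PresentedGroup.of]
  have := PresentedGroup.one_of_mem (rels := Γ.rels)
      (x := altWord x y (Γ.m x y) * (altWord y x (Γ.m x y))⁻¹) (Or.inr ⟨x, y, hxy, rfl⟩)
  rw [hl, ← mul_inv_eq_one, ← map_inv, ← map_mul, this]

theorem gen_commute {V : Type*} (Γ : DyerGraph V) {x y : V} (hxy : Γ.Adj x y)
    (hm : Γ.m x y = 2) : Commute (Γ.gen x) (Γ.gen y) := by
  have := Γ.lift_gen_altWord hxy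
  rw [hm] at this
  rw [commute_iff_eq]
  simpa [altWord] using this

/-- The universal property of the Dyer group, with edges labelled `2` treated separately. -/
theorem exists_hom {V H : Type*} [Group H] (Γ : DyerGraph V) (u : V → H)
    (hpow : ∀ x, u x ^ (Γ.f x).toNat = 1)
    (hcomm : ∀ x y, Γ.Adj x y → Γ.m x y = 2 → Commute (u x) (u y))
    (hbraid : ∀ x y, Γ.Adj x y → x ∈ Γ.V2 → y ∈ Γ.V2 →
      FreeGroup.lift u (altWord x y (Γ.m x y)) = FreeGroup.lift u (altWord y x (Γ.m x y))) :
    ∃ φ : Γ.DyerGroup →* H, ∀ x, φ (Γ.gen x) = u x := by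
  have hr : ∀ r ∈ Γ.rels, FreeGroup.lift u r = 1 := by
    rintro r (⟨x, -, rfl⟩ | ⟨x, y, hxy, rfl⟩)
    · simp [hpow]
    · rw [map_mul, map_inv, mul_inv_eq_one]
      by_cases hm : Γ.m x y = 2
      · simpa [hm, altWord] using (hcomm x y hxy hm).eq
      · exact hbraid x y hxy (Γ.compat hxy hm).1 (Γ.compat hxy hm).2
  exact ⟨PresentedGroup.toGroup hr, fun x => PresentedGroup.toGroup.of hr⟩

/-- The retraction of `D` onto `D_X` that kills the generators outside `X`. -/
theorem exists_retraction {V : Type*} (Γ : DyerGraph V) (X : Set V)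
    (hX : Γ.V2 ⊆ X ∨ Disjoint X Γ.V2) :
    ∃ ρ : Γ.DyerGroup →* Γ.DyerGroup, (∀ g ∈ Γ.parabolic X, ρ g = g) ∧
      ∀ Y : Set V, Disjoint X Y → ∀ g ∈ Γ.parabolic Y, ρ g = 1 := by
  let u : V → Γ.DyerGroup := fun x => if x ∈ X then Γ.gen x else 1
  have hin : ∀ {x}, x ∈ X → u x = Γ.gen x := fun hx => if_pos hx
  have hout : ∀ {x}, x ∉ X → u x = 1 := fun hx => if_neg hx
  obtain ⟨ρ, hρ⟩ := Γ.exists_hom u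
    (by
      intro x
      by_cases hx : x ∈ X
      · rw [hin hx, gen_pow]
      · rw [hout hx, one_pow])
    (by
      intro x y hxy hm
      by_cases hx : x ∈ X <;> by_cases hy : y ∈ X <;>
        simp [hx, hy, hin, hout, Γ.gen_commute hxy hm])
    (by
      intro x y hxy hx hy
      rcases hX with hX | hX
      · exact (lift_altWord_congr (hin (hX hx)) (hin (hX hy)) _).trans
          ((Γ.lift_gen_altWord hxy).trans
            (lift_altWord_congr (hin (hX hy)) (hin (hX hx)) _).symm)
      · exact lift_altWord_comm_of_eq_one (hout (hX.notMem_of_mem_right hx))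
          (hout (hX.notMem_of_mem_right hy)) _)
  refine ⟨ρ, fun g hg => ?_, fun Y hXY g hg => ?_⟩
  · have : Γ.parabolic X ≤ ρ.eqLocus (MonoidHom.id _) := by
      refine (Subgroup.closure_le _).2 ?_
      rintro _ ⟨x, hx, rfl⟩
      change ρ (Γ.gen x) = Γ.gen x
      rw [hρ, hin hx]
    exact this hg
  · have : Γ.parabolic Y ≤ ρ.ker := by
      refine (Subgroup.closure_le _).2 ?_
      rintro _ ⟨y, hy, rfl⟩
      change ρ (Γ.gen y) = 1
      rw [hρ, hout (hXY.notMem_of_mem_right hy)]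
    exact this hg

theorem m_eq_two {V : Type*} (Γ : DyerGraph V) {x y : V} (hxy : Γ.Adj x y)
    (hy : y ∉ Γ.V2) : Γ.m x y = 2 := by
  by_contra hm
  exact hy (Γ.compat hxy hm).2

theorem gen_commute_of_notMem {V : Type*} (Γ : DyerGraph V)
    (hΓ : ∀ x y : V, x ≠ y → Γ.Adj x y) {x y : V} (hy : y ∉ Γ.V2) :
    Commute (Γ.gen x) (Γ.gen y) := by
  by_cases hxy : x = y
  · rw [hxy]
  · exact Γ.gen_commute (hΓ x y hxy) (Γ.m_eq_two (hΓ x y hxy) hy)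

theorem parabolic_commute {V : Type*} (Γ : DyerGraph V)
    (hΓ : ∀ x y : V, x ≠ y → Γ.Adj x y) {X Y : Set V} (hY : Disjoint Y Γ.V2)
    {g h : Γ.DyerGroup} (hg : g ∈ Γ.parabolic X) (hh : h ∈ Γ.parabolic Y) : Commute g h := by
  have hle : Γ.parabolic X ≤ Subgroup.centralizer (Γ.parabolic Y) := by
    rw [parabolic, parabolic, Subgroup.centralizer_closure, Subgroup.closure_le]
    rintro _ ⟨x, _, rfl⟩
    refine Subgroup.mem_centralizer_iff.2 ?_
    rintro _ ⟨y, hy, rfl⟩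
    exact (Γ.gen_commute_of_notMem hΓ (hY.notMem_of_mem_left hy)).symm.eq
  exact (Subgroup.mem_centralizer_iff.1 (hle hg) h hh).symm

/-- The structure of `D_X` for `X` disjoint from `V_2`; a vertex with `f x = ∞` contributes
`ZMod 0 = ℤ`. -/
theorem parabolic_equiv {V : Type*} [Fintype V] (Γ : DyerGraph V)
    (hΓ : ∀ x y : V, x ≠ y → Γ.Adj x y) (X : Set V) (hX : Disjoint X Γ.V2) :
    Nonempty (Γ.parabolic X ≃* ∀ x : X, Multiplicative (ZMod (Γ.f (x : V)).toNat)) := by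
  obtain ⟨φ, hφ⟩ := Γ.exists_hom
    (fun x => if hx : x ∈ X then (Pi.mulSingle (⟨x, hx⟩ : X) (Multiplicative.ofAdd 1) :
      ∀ x : X, Multiplicative (ZMod (Γ.f (x : V)).toNat)) else 1)
    (by
      intro x
      by_cases hx : x ∈ X
      · simp only [hx, dif_pos]
        rw [← Pi.mulSingle_pow, ← ofAdd_nsmul, nsmul_one, ZMod.natCast_self, ofAdd_zero,
          Pi.mulSingle_one]
      · simp [hx])
    (fun x y _ _ => Commute.all _ _)
    (by
      intro x y hxy hx hy
      exact lift_altWord_comm_of_eq_one (dif_neg (hX.notMem_of_mem_right hx))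
        (dif_neg (hX.notMem_of_mem_right hy)) _)
  have := closure_equiv_pi_zmod (fun x : X => (Γ.f (x : V)).toNat) (fun x : X => Γ.gen x)
    (fun x y => Γ.gen_commute_of_notMem hΓ (hX.notMem_of_mem_left y.2))
    (fun x => Γ.gen_pow x) φ (fun x => by rw [hφ, dif_pos x.2])
  rwa [show Set.range (fun x : X => Γ.gen x) = Γ.gen '' X by
    rw [Set.image_eq_range]] at this

end DyerGraph

/-- For a Dyer system of spherical type, the multiplication map
`D_2 × D_p × D_∞ → D` is a group isomorphism; moreover `D_p ≅ ∏_{x∈V_p} ℤ/f(x)ℤ`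
and `D_∞ ≅ ℤ^l` with `l = |V_∞|`. -/
theorem spherical_decomposition
    {V : Type} [Fintype V] (Γ : DyerGraph V) (h : Γ.Spherical) :
    (Function.Bijective
        (fun p : (Γ.parabolic Γ.V2) × (Γ.parabolic Γ.Vp) × (Γ.parabolic Γ.Vinf) =>
          ((p.1 : Γ.DyerGroup) * (p.2.1 : Γ.DyerGroup) * (p.2.2 : Γ.DyerGroup))) ∧
      ∀ p q : (Γ.parabolic Γ.V2) × (Γ.parabolic Γ.Vp) × (Γ.parabolic Γ.Vinf),
        (((p * q).1 : Γ.DyerGroup) * ((p * q).2.1 : Γ.DyerGroup) * ((p * q).2.2 : Γ.DyerGroup)) =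
          ((p.1 : Γ.DyerGroup) * (p.2.1 : Γ.DyerGroup) * (p.2.2 : Γ.DyerGroup)) *
          ((q.1 : Γ.DyerGroup) * (q.2.1 : Γ.DyerGroup) * (q.2.2 : Γ.DyerGroup))) ∧
    Nonempty ((Γ.parabolic Γ.Vp) ≃*
      ∀ x : Γ.Vp, Multiplicative (ZMod (Γ.f (x : V)).toNat)) ∧
    Nonempty ((Γ.parabolic Γ.Vinf) ≃*
      Multiplicative (Fin (Nat.card Γ.Vinf) → ℤ)) := by
  obtain ⟨hΓ, -⟩ := h
  have hp2 : Disjoint Γ.Vp Γ.V2 := Set.disjoint_left.2 fun x hx h2 => hx.1.ne' h2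
  have hi2 : Disjoint Γ.Vinf Γ.V2 := Set.disjoint_left.2 fun x (hx : Γ.f x = ⊤) h2 => by
    have h2' : Γ.f x = 2 := h2
    rw [hx] at h2'
    exact absurd h2' (by decide)
  have hip : Disjoint Γ.Vinf Γ.Vp := Set.disjoint_left.2 fun x hx hp => hp.2 hx
  have hmul : ∀ p q : (Γ.parabolic Γ.V2) × (Γ.parabolic Γ.Vp) × (Γ.parabolic Γ.Vinf),
        (((p * q).1 : Γ.DyerGroup) * ((p * q).2.1 : Γ.DyerGroup) * ((p * q).2.2 : Γ.DyerGroup)) =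
          ((p.1 : Γ.DyerGroup) * (p.2.1 : Γ.DyerGroup) * (p.2.2 : Γ.DyerGroup)) *
          ((q.1 : Γ.DyerGroup) * (q.2.1 : Γ.DyerGroup) * (q.2.2 : Γ.DyerGroup)) := by
    rintro ⟨⟨a, ha⟩, ⟨b, hb⟩, ⟨c, hc⟩⟩ ⟨⟨a', ha'⟩, ⟨b', hb'⟩, ⟨c', hc'⟩⟩
    have e1 : Commute a' b := Γ.parabolic_commute hΓ hp2 ha' hb
    have e2 : Commute a' c := Γ.parabolic_commute hΓ hi2 ha' hc
    have e3 : Commute b' c := Γ.parabolic_commute hΓ hi2 hb' hc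
    change a * a' * (b * b') * (c * c') = a * b * c * (a' * b' * c')
    calc a * a' * (b * b') * (c * c') = a * (a' * b) * (b' * c) * c' := by group
      _ = a * b * (a' * c) * b' * c' := by rw [e1.eq, e3.eq]; group
      _ = a * b * c * (a' * b' * c') := by rw [e2.eq]; group
  refine ⟨⟨⟨?_, ?_⟩, hmul⟩, Γ.parabolic_equiv hΓ _ hp2, ?_⟩
  · obtain ⟨ρ₂, h2, h2'⟩ := Γ.exists_retraction Γ.V2 (Or.inl subset_rfl)
    obtain ⟨ρₚ, hp, hp'⟩ := Γ.exists_retraction Γ.Vp (Or.inr hp2)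
    obtain ⟨ρᵢ, hi, hi'⟩ := Γ.exists_retraction Γ.Vinf (Or.inr hi2)
    rintro ⟨⟨a, ha⟩, ⟨b, hb⟩, ⟨c, hc⟩⟩ ⟨⟨a', ha'⟩, ⟨b', hb'⟩, ⟨c', hc'⟩⟩ heq
    change a * b * c = a' * b' * c' at heq
    have k2 := congrArg ρ₂ heq
    have kp := congrArg ρₚ heq
    have ki := congrArg ρᵢ heq
    simp only [map_mul, h2 _ ha, h2 _ ha', h2' _ hp2.symm _ hb, h2' _ hp2.symm _ hb',
      h2' _ hi2.symm _ hc, h2' _ hi2.symm _ hc', mul_one] at k2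
    simp only [map_mul, hp _ hb, hp _ hb', hp' _ hp2 _ ha, hp' _ hp2 _ ha',
      hp' _ hip.symm _ hc, hp' _ hip.symm _ hc', mul_one, one_mul] at kp
    simp only [map_mul, hi _ hc, hi _ hc', hi' _ hi2 _ ha, hi' _ hi2 _ ha',
      hi' _ hip _ hb, hi' _ hip _ hb', one_mul] at ki
    subst k2 kp ki
    rfl
  · let μ : (Γ.parabolic Γ.V2) × (Γ.parabolic Γ.Vp) × (Γ.parabolic Γ.Vinf) →* Γ.DyerGroup :=
      MonoidHom.mk' (fun p => p.1 * p.2.1 * p.2.2) hmul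
    have hgen : ∀ x, Γ.gen x ∈ μ.range := by
      intro x
      by_cases hx2 : x ∈ Γ.V2
      · exact ⟨(⟨Γ.gen x, Subgroup.subset_closure ⟨x, hx2, rfl⟩⟩, 1, 1), by simp [μ]⟩
      by_cases hxi : x ∈ Γ.Vinf
      · exact ⟨(1, 1, ⟨Γ.gen x, Subgroup.subset_closure ⟨x, hxi, rfl⟩⟩), by simp [μ]⟩
      have hxp : x ∈ Γ.Vp := ⟨lt_of_le_of_ne (Γ.f_ge x) (Ne.symm hx2), hxi⟩
      exact ⟨(1, ⟨Γ.gen x, Subgroup.subset_closure ⟨x, hxp, rfl⟩⟩, 1), by simp [μ]⟩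
    have htop : μ.range = ⊤ := by
      rw [eq_top_iff, ← PresentedGroup.closure_range_of Γ.rels, Subgroup.closure_le]
      rintro _ ⟨x, rfl⟩
      exact hgen x
    exact MonoidHom.range_eq_top.1 htop
  · obtain ⟨e⟩ := Γ.parabolic_equiv hΓ _ hi2
    -- Every factor is `ZMod 0`, that is, `ℤ`.
    have e₁ : ∀ x : Γ.Vinf, Nonempty (Multiplicative (ZMod (Γ.f (x : V)).toNat) ≃*
        Multiplicative ℤ) := by
      rintro ⟨x, hx⟩
      have hx0 : (Γ.f x).toNat = 0 := by
        rw [show Γ.f x = ⊤ from hx]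
        rfl
      rw [hx0]
      exact ⟨MulEquiv.refl _⟩
    let e₂ : (Γ.Vinf → Multiplicative ℤ) ≃* (Fin (Nat.card Γ.Vinf) → Multiplicative ℤ) :=
      MulEquiv.arrowCongr (Finite.equivFin Γ.Vinf) (MulEquiv.refl _)
    let e₃ : (Fin (Nat.card Γ.Vinf) → Multiplicative ℤ) ≃*
        Multiplicative (Fin (Nat.card Γ.Vinf) → ℤ) :=
      { toFun := fun a => Multiplicative.ofAdd fun i => (a i).toAdd
        invFun := fun a i => Multiplicative.ofAdd (a.toAdd i)
        left_inv := fun _ => rfl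
        right_inv := fun _ => rfl
        map_mul' := fun _ _ => rfl }
    exact ⟨((e.trans (MulEquiv.piCongrRight fun x => (e₁ x).some)).trans e₂).trans e₃⟩
end

section
/- Let H and K be groups with a common subgroup L, let S, T, R be finite generating sets of H, K, L respectively, and let G = H *_L K be the amalgamated free product, generated by S ∪ T. If (L,R) is admissible in (H,S) and (L,R) is admissible in (K,T), then in ℤ[[t]], 𝒢_{(G, S∪T)}(t)^{−1} = 𝒢_{(H,S)}(t)^{−1} + 𝒢_{(K,T)}(t)^{−1} − 𝒢_{(L,R)}(t)^{−1}. -/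
/-!
Let `U`, `V` be the transversals of `L` in `H` and `K` given by admissibility. Every element of
`G = H *_L K` has a unique normal form `l * u₁ * ⋯ * uₙ` with `l ∈ L` and the `uᵢ` nontrivial
elements taken alternately from `U` and `V`. Its word length over `S ∪ T` is the sum of the lengths
of `l` and of the `uᵢ` (`wordLength_eq_normalLength`): the upper bound is subadditivity, and for the
lower bound, left multiplication by an element of `H` (or `K`) changes only the part of the normal
form lying in that factor, where admissibility makes the sum equal to the word length in the factor,
so multiplying by one generator raises the sum by at most one (`normalLength_of_smul_le`).

Let `P` (resp. `Q`) be the set of elements with `l = 1` whose normal form does not start in `H`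
(resp. `K`). Then multiplication gives length-additive bijections `H × P → G`, `K × Q → G` and
`L × (P ∪ Q) → G`, while `P ∩ Q = {1}`. On growth series this reads
`𝒢_G = 𝒢_H * 𝒢_P = 𝒢_K * 𝒢_Q = 𝒢_L * (𝒢_P + 𝒢_Q - 1)`, and dividing by `𝒢_G` yields the formula.
-/

open scoped Classical
open Monoid

/-- `(L, T)` is admissible in `(H, S)` (all living inside an ambient group `G`). -/
def Admissible {G : Type*} [Group G] (Hgrp : Subgroup G) (S : Set G)
    (Lgrp : Subgroup G) (T : Set G) : Prop :=
  Lgrp ≤ Hgrp ∧ T ⊆ S ∧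
  ∃ U : Set G, U ⊆ (Hgrp : Set G) ∧ (1 : G) ∈ U ∧
    (∀ g ∈ Hgrp, ∃! p : G × G, p.1 ∈ Lgrp ∧ p.2 ∈ U ∧ p.1 * p.2 = g) ∧
    ∀ h ∈ Lgrp, ∀ u ∈ U,
      wordLength S (h * u) = wordLength T h + wordLength S u

/-- The two factors of an amalgam of two subgroups `H`, `K`, indexed by `Bool`. -/
def amalgFactor {G : Type*} [Group G] (H K : Subgroup G) : Bool → Type _ :=
  fun b => cond b H K

instance {G : Type*} [Group G] (H K : Subgroup G) (b : Bool) :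
    Group (amalgFactor H K b) := by
  cases b <;> (dsimp [amalgFactor]; infer_instance)

/-- The inclusions of the common subgroup `L` into the two factors. -/
def amalgBase {G : Type*} [Group G] {H K L : Subgroup G} (hLH : L ≤ H) (hLK : L ≤ K) :
    ∀ b : Bool, L →* amalgFactor H K b :=
  fun b => b.rec (Subgroup.inclusion hLK) (Subgroup.inclusion hLH)

/-- The natural homomorphism from the amalgamated free product `H *_L K`
to the ambient group, induced by the inclusions. -/
noncomputable def amalgLift {G : Type*} [Group G] {H K L : Subgroup G}
    (hLH : L ≤ H) (hLK : L ≤ K) :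
    PushoutI (amalgBase hLH hLK) →* G :=
  PushoutI.lift (fun b => b.rec K.subtype H.subtype) L.subtype
    (by rintro (_ | _) <;> rfl)

/-! ### The length of a normal form in an amalgamated product -/

section NormalLength
open Monoid.PushoutI Monoid.PushoutI.NormalWord Monoid.CoprodI
variable {ι : Type*} {F : ι → Type*} {B : Type*} [∀ i, Group (F i)] [Group B]
  {φ : ∀ i, B →* F i}

/-- The sum of the lengths of the letters of a word in a free product. -/
def lettersLength (len : ∀ i, F i → ℕ) (w : Word F) : ℕ :=
  (w.toList.map fun a => len a.1 a.2).sum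

/-- The length read off a normal form: the length `lenB` of the head plus the lengths of all the
letters. -/
def normalLength (len : ∀ i, F i → ℕ) (lenB : B → ℕ) {d : Transversal φ} (w : NormalWord d) : ℕ :=
  lenB w.head + lettersLength len w.toWord

/-- The elements whose normal form has trivial head and does not start with a letter of the
factor `i`. They form a transversal of the factor `i` in the pushout. -/
def tails (d : Transversal φ) (i : ι) : Set (PushoutI φ) :=
  {x | ∃ w : NormalWord d, w.head = 1 ∧ w.fstIdx ≠ some i ∧ w.prod = x}

variable {d : Transversal φ} {len : ∀ i, F i → ℕ} {lenB : B → ℕ}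
  [DecidableEq ι] [∀ i, DecidableEq (F i)]

/-- Splitting `p.head` into base part and transversal part does not change the total length, since
lengths in the factor `i` are additive along that splitting. -/
theorem normalLength_rcons (h1 : ∀ i, len i 1 = 0)
    (hadd : ∀ i b, ∀ u ∈ d.set i, len i (φ i b * u) = lenB b + len i u)
    {i : ι} (p : NormalWord.Pair d i) :
    normalLength len lenB (NormalWord.rcons i p) = len i p.head + lettersLength len p.tail := by
  have key : len i p.head = lenB ((MonoidHom.ofInjective (d.injective i)).symm
      ((d.compl i).equiv p.head).1) + len i ((d.compl i).equiv p.head).2 := by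
    rw [← hadd i _ _ (Subtype.coe_prop _), MonoidHom.apply_ofInjective_symm,
      Subgroup.IsComplement.equiv_fst_mul_equiv_snd]
  rw [key, normalLength, add_assoc]
  congr 1
  simp only [NormalWord.rcons, Word.equivPair_symm, Word.rcons, lettersLength]
  split_ifs with h
  · simp only [h, h1, zero_add]
  · simp [Word.cons]

theorem prod_rcons {i : ι} (p : NormalWord.Pair d i) :
    (NormalWord.rcons i p).prod = of i p.head * NormalWord.prod ⟨p.tail, 1, p.normalized⟩ := by
  simp only [NormalWord.prod, NormalWord.rcons, Word.equivPair_symm, Word.rcons_eq_smul,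
    ← of_apply_eq_base φ i, MonoidHom.apply_ofInjective_symm, Word.prod_smul, map_mul,
    ofCoprodI_of, map_one, one_mul, ← mul_assoc]
  rw [← map_mul, Subgroup.IsComplement.equiv_fst_mul_equiv_snd]

theorem normalLength_of_smul_le (h1 : ∀ i, len i 1 = 0)
    (hsub : ∀ i x y, len i (x * y) ≤ len i x + len i y)
    (hadd : ∀ i b, ∀ u ∈ d.set i, len i (φ i b * u) = lenB b + len i u)
    {i : ι} (g : F i) (w : NormalWord d) :
    normalLength len lenB (of (φ := φ) i g • w) ≤ len i g + normalLength len lenB w := by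
  have hw : normalLength len lenB w
      = len i (NormalWord.equivPair i w).head
        + lettersLength len (NormalWord.equivPair i w).tail := by
    rw [← normalLength_rcons h1 hadd]
    exact congrArg _ ((NormalWord.equivPair i).symm_apply_apply w).symm
  rw [hw, summand_smul_def]
  refine (normalLength_rcons h1 hadd _).le.trans ?_
  have := hsub i g (NormalWord.equivPair i w).head
  simp only
  omega

theorem exists_of_mul_tails (d : Transversal φ) (i : ι) (x : PushoutI φ) :
    ∃ g : F i, ∃ y ∈ tails d i, of i g * y = x := by
  let w : NormalWord d := NormalWord.equiv x
  let p := NormalWord.equivPair i w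
  refine ⟨p.head, _, ⟨⟨p.tail, 1, p.normalized⟩, rfl, p.fstIdx_ne, rfl⟩, ?_⟩
  rw [← prod_rcons]
  have : NormalWord.rcons i p = w := (NormalWord.equivPair i).symm_apply_apply w
  rw [this]
  exact NormalWord.equiv.symm_apply_apply x

theorem of_mul_tails_inj {i : ι} {g g' : F i} {y y' : PushoutI φ} (hy : y ∈ tails d i)
    (hy' : y' ∈ tails d i) (h : of i g * y = of i g' * y') : g = g' ∧ y = y' := by
  obtain ⟨⟨w, _, hn⟩, rfl, hi, rfl⟩ := hy
  obtain ⟨⟨w', _, hn'⟩, rfl, hi', rfl⟩ := hy'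
  let p : NormalWord.Pair d i := ⟨⟨g, w, hi⟩, hn⟩
  let p' : NormalWord.Pair d i := ⟨⟨g', w', hi'⟩, hn'⟩
  have e : p = p' := by
    apply NormalWord.rcons_injective
    apply NormalWord.prod_injective
    rw [prod_rcons, prod_rcons]
    exact h
  simp only [p, p', NormalWord.Pair.mk.injEq, Word.Pair.mk.injEq] at e
  obtain ⟨rfl, rfl⟩ := e
  exact ⟨rfl, rfl⟩

theorem normalLength_of_mul_tails (h1 : ∀ i, len i 1 = 0) (hB : lenB 1 = 0)
    (hadd : ∀ i b, ∀ u ∈ d.set i, len i (φ i b * u) = lenB b + len i u)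
    {i : ι} (g : F i) {y : PushoutI φ} (hy : y ∈ tails d i) :
    normalLength len lenB (NormalWord.equiv (d := d) (of i g * y))
      = len i g + normalLength len lenB (NormalWord.equiv (d := d) y) := by
  obtain ⟨⟨w, _, hn⟩, rfl, hi, rfl⟩ := hy
  let p : NormalWord.Pair d i := ⟨⟨g, w, hi⟩, hn⟩
  have e : of i g * NormalWord.prod ⟨w, 1, hn⟩ = (NormalWord.rcons i p).prod :=
    (prod_rcons p).symm
  rw [e]
  have e1 : ∀ v : NormalWord d, NormalWord.equiv v.prod = v := NormalWord.equiv.apply_symm_apply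
  rw [e1, e1, normalLength_rcons h1 hadd]
  simp [normalLength, hB, p]

end NormalLength

/-! ### Word length and growth series -/

section WordLength
variable {G : Type*} [Group G] {S T : Set G} {g h : G}

theorem wordLength_le_of_list {w : List G} (hw : ∀ a ∈ w, a ∈ S ∪ S⁻¹) :
    wordLength S w.prod ≤ w.length :=
  Nat.sInf_le ⟨w, rfl, hw, rfl⟩

theorem exists_list_wordLength (hg : g ∈ Subgroup.closure S) :
    ∃ w : List G, w.length = wordLength S g ∧ (∀ a ∈ w, a ∈ S ∪ S⁻¹) ∧ w.prod = g := by
  have hne : {n | ∃ w : List G, w.length = n ∧ (∀ a ∈ w, a ∈ S ∪ S⁻¹) ∧ w.prod = g}.Nonempty := by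
    rw [← Subgroup.mem_toSubmonoid, Subgroup.closure_toSubmonoid] at hg
    obtain ⟨w, hw, rfl⟩ := Submonoid.exists_list_of_mem_closure hg
    exact ⟨w.length, w, rfl, hw, rfl⟩
  exact Nat.sInf_mem hne

theorem wordLength_one : wordLength S (1 : G) = 0 :=
  Nat.le_zero.mp (wordLength_le_of_list (S := S) (w := []) (by simp))

theorem eq_one_of_wordLength_eq_zero (hg : g ∈ Subgroup.closure S) (h0 : wordLength S g = 0) :
    g = 1 := by
  obtain ⟨w, hl, -, rfl⟩ := exists_list_wordLength hg
  rw [h0, List.length_eq_zero_iff] at hl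
  simp [hl]

theorem wordLength_mul_le (hg : g ∈ Subgroup.closure S) (hh : h ∈ Subgroup.closure S) :
    wordLength S (g * h) ≤ wordLength S g + wordLength S h := by
  obtain ⟨w, hl, hw, rfl⟩ := exists_list_wordLength hg
  obtain ⟨v, hl', hv, rfl⟩ := exists_list_wordLength hh
  rw [← hl, ← hl', ← List.prod_append, ← List.length_append]
  apply wordLength_le_of_list
  intro a ha
  rcases List.mem_append.mp ha with ha | ha
  exacts [hw a ha, hv a ha]

theorem wordLength_anti (hST : S ⊆ T) (hg : g ∈ Subgroup.closure S) :
    wordLength T g ≤ wordLength S g := by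
  obtain ⟨w, hl, hw, rfl⟩ := exists_list_wordLength hg
  rw [← hl]
  exact wordLength_le_of_list fun a ha => (hw a ha).imp (@hST a) (@hST a⁻¹)

theorem finite_wordLength_eq (hS : S.Finite) {A : Set G} (hA : A ⊆ Subgroup.closure S) (n : ℕ) :
    {g ∈ A | wordLength S g = n}.Finite := by
  have hfin : (S ∪ S⁻¹).Finite := hS.union hS.inv
  have : Finite ↥(S ∪ S⁻¹) := hfin
  refine ((List.finite_length_eq ↥(S ∪ S⁻¹) n).image
    fun w => (w.map Subtype.val).prod).subset ?_
  rintro g ⟨hg, rfl⟩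
  obtain ⟨w, hl, hw, hp⟩ := exists_list_wordLength (hA hg)
  lift w to List ↥(S ∪ S⁻¹) using hw
  exact ⟨w, by simpa using hl, hp⟩

theorem isUnit_growthSeries {A : Set G} (hA : A ⊆ Subgroup.closure S) (h1 : (1 : G) ∈ A) :
    IsUnit (growthSeries S A) := by
  have h : {g ∈ A | wordLength S g = 0} = {1} := by
    ext g
    simp only [Set.mem_ofPred_eq, Set.mem_singleton_iff]
    constructor
    · rintro ⟨hg, h0⟩
      exact eq_one_of_wordLength_eq_zero (hA hg) h0
    · rintro rfl
      exact ⟨h1, wordLength_one⟩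
  rw [PowerSeries.isUnit_iff_constantCoeff, ← PowerSeries.coeff_zero_eq_constantCoeff_apply,
    growthSeries, PowerSeries.coeff_mk, h]
  simp

theorem growthSeries_singleton_one : growthSeries S ({1} : Set G) = 1 := by
  ext n
  rw [growthSeries, PowerSeries.coeff_mk, PowerSeries.coeff_one]
  split_ifs with hn
  · have : {g ∈ ({1} : Set G) | wordLength S g = n} = {1} := by
      ext g
      simp only [Set.mem_ofPred_eq, Set.mem_singleton_iff, and_iff_left_iff_imp]
      rintro rfl
      rw [wordLength_one, hn]
    rw [this]
    simp
  · have : {g ∈ ({1} : Set G) | wordLength S g = n} = ∅ := by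
      ext g
      simp only [Set.mem_ofPred_eq, Set.mem_singleton_iff, Set.mem_empty_iff_false, iff_false]
      rintro ⟨rfl, h⟩
      exact hn (by rw [← h, wordLength_one])
    rw [this]
    simp

theorem growthSeries_union_add_inter {A B : Set G}
    (hA : ∀ n, {g ∈ A | wordLength S g = n}.Finite)
    (hB : ∀ n, {g ∈ B | wordLength S g = n}.Finite) :
    growthSeries S (A ∪ B) + growthSeries S (A ∩ B) = growthSeries S A + growthSeries S B := by
  ext n
  simp only [growthSeries, map_add, PowerSeries.coeff_mk]
  have := Set.ncard_union_add_ncard_inter _ _ (hA n) (hB n)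
  have e1 : {g ∈ A ∪ B | wordLength S g = n}
      = {g ∈ A | wordLength S g = n} ∪ {g ∈ B | wordLength S g = n} := by
    ext; simp only [Set.mem_ofPred_eq, Set.mem_union]; tauto
  have e2 : {g ∈ A ∩ B | wordLength S g = n}
      = {g ∈ A | wordLength S g = n} ∩ {g ∈ B | wordLength S g = n} := by
    ext; simp only [Set.mem_ofPred_eq, Set.mem_inter_iff]; tauto
  rw [e1, e2]
  exact_mod_cast this

/-- Growth series are multiplicative along a bijective, length-additive product decomposition
`A × B → C`; lengths in `A` may be measured over a generating set of their own. -/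
theorem growthSeries_mul {S' : Set G} {A B C : Set G}
    (hA : ∀ n, {g ∈ A | wordLength S g = n}.Finite)
    (hB : ∀ n, {g ∈ B | wordLength S' g = n}.Finite)
    (hbij : Set.BijOn (fun p : G × G => p.1 * p.2) (A ×ˢ B) C)
    (hlen : ∀ a ∈ A, ∀ b ∈ B, wordLength S' (a * b) = wordLength S a + wordLength S' b) :
    growthSeries S' C = growthSeries S A * growthSeries S' B := by
  ext n
  rw [PowerSeries.coeff_mul]
  simp only [growthSeries, PowerSeries.coeff_mk]
  let D : ℕ × ℕ → Finset (G × G) := fun q => (hA q.1).toFinset ×ˢ (hB q.2).toFinset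
  have hD : ∀ q p, p ∈ D q ↔ (p.1 ∈ A ∧ wordLength S p.1 = q.1) ∧
      (p.2 ∈ B ∧ wordLength S' p.2 = q.2) := by
    intro q p; simp [D]
  have hC : {g ∈ C | wordLength S' g = n} =
      (fun p : G × G => p.1 * p.2) '' ((Finset.HasAntidiagonal.antidiagonal n).biUnion D : Finset (G × G)) := by
    ext g
    simp only [Set.mem_ofPred_eq, Set.mem_image, Finset.mem_coe, Finset.mem_biUnion, hD,
      Finset.HasAntidiagonal.mem_antidiagonal]
    constructor
    · rintro ⟨hg, rfl⟩
      obtain ⟨p, ⟨hp1, hp2⟩, rfl⟩ := hbij.surjOn hg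
      exact ⟨p, ⟨(_, _), (hlen _ hp1 _ hp2).symm, ⟨hp1, rfl⟩, hp2, rfl⟩, rfl⟩
    · rintro ⟨p, ⟨q, hq, ⟨hp1, h1⟩, hp2, h2⟩, rfl⟩
      exact ⟨hbij.mapsTo ⟨hp1, hp2⟩, by rw [hlen _ hp1 _ hp2, h1, h2, hq]⟩
  have hinj : Set.InjOn (fun p : G × G => p.1 * p.2)
      ((Finset.HasAntidiagonal.antidiagonal n).biUnion D : Finset (G × G)) := by
    refine hbij.injOn.mono ?_
    intro p hp
    simp only [Finset.mem_coe, Finset.mem_biUnion, hD] at hp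
    obtain ⟨q, -, h1, h2⟩ := hp
    exact ⟨h1.1, h2.1⟩
  have hdisj : ((Finset.HasAntidiagonal.antidiagonal n : Finset (ℕ × ℕ)) : Set (ℕ × ℕ)).PairwiseDisjoint D := by
    intro q _ q' _ hne
    rw [Function.onFun, Finset.disjoint_left]
    intro p hp hp'
    rw [hD] at hp hp'
    exact hne (Prod.ext (hp.1.2.symm.trans hp'.1.2) (hp.2.2.symm.trans hp'.2.2))
  rw [hC, Set.InjOn.ncard_image hinj, Set.ncard_coe_finset, Finset.card_biUnion hdisj]
  push_cast
  refine Finset.sum_congr rfl fun q _ => ?_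
  rw [Finset.card_product, Nat.cast_mul, Set.ncard_eq_toFinset_card _ (hA q.1),
    Set.ncard_eq_toFinset_card _ (hB q.2)]

end WordLength

/-! ### Word length in an amalgamated product -/

section Amalgam
open Monoid.PushoutI Monoid.PushoutI.NormalWord Monoid.CoprodI
variable {G : Type*} [Group G] {ι : Type*} {F : ι → Type*} {B : Type*} [∀ i, Group (F i)] [Group B]
  {φ : ∀ i, B →* F i}

/-- A transversal given inside the ambient group pulls back to a complement in the factor. -/
theorem isComplement_preimage {A : Type*} [Group A] {inc : A →* G} (hinj : Function.Injective inc)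
    (ψ : B →* A) {U : Set G} (hU : U ⊆ inc.range)
    (hex : ∀ g ∈ inc.range, ∃! p : G × G, p.1 ∈ (inc.comp ψ).range ∧ p.2 ∈ U ∧ p.1 * p.2 = g) :
    Subgroup.IsComplement (ψ.range : Set A) (inc ⁻¹' U) := by
  constructor
  · rintro ⟨⟨_, b, rfl⟩, ⟨u, hu⟩⟩ ⟨⟨_, b', rfl⟩, ⟨u', hu'⟩⟩ h
    simp only at h
    have := (hex _ ⟨_, rfl⟩).unique (y₁ := (inc (ψ b), inc u)) (y₂ := (inc (ψ b'), inc u'))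
      ⟨⟨b, rfl⟩, hu, (map_mul inc _ _).symm⟩ ⟨⟨b', rfl⟩, hu', by rw [h, map_mul]⟩
    obtain ⟨h1, h2⟩ := Prod.ext_iff.mp this
    exact Prod.ext (Subtype.ext (hinj h1)) (Subtype.ext (hinj h2))
  · intro a
    obtain ⟨⟨x, y⟩, ⟨⟨b, rfl⟩, hy, hxy⟩, -⟩ := hex (inc a) ⟨a, rfl⟩
    obtain ⟨u, rfl⟩ := hU hy
    exact ⟨⟨⟨ψ b, b, rfl⟩, ⟨u, hy⟩⟩, hinj (by simpa using hxy)⟩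

variable {inc : ∀ i, F i →* G} {e : PushoutI φ →* G} {X : ι → Set G} {R Z : Set G}

theorem closure_iUnion_eq_top [Nonempty ι] (he : Function.Surjective e)
    (hof : ∀ i g, e (of i g) = inc i g)
    (hX : ∀ i, Subgroup.closure (X i) = (inc i).range) :
    Subgroup.closure (⋃ i, X i) = ⊤ := by
  rw [eq_top_iff]
  rintro x -
  obtain ⟨x, rfl⟩ := he x
  have h : ∀ i (g : F i), e (of i g) ∈ Subgroup.closure (⋃ i, X i) := fun i g => by
    refine Subgroup.closure_mono (Set.subset_iUnion X i) ?_
    rw [hX, hof]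
    exact ⟨g, rfl⟩
  induction x using PushoutI.induction_on with
  | of i g => exact h i g
  | base b => rw [← of_apply_eq_base φ (Classical.arbitrary ι)]; exact h _ _
  | mul x y hx hy => rw [map_mul]; exact mul_mem hx hy

variable {d : Transversal φ} [DecidableEq ι] [∀ i, DecidableEq (F i)]

/-- If the lengths in the factors are additive along the transversals, normal forms are geodesic:
the word length over the union of the generating sets is the length of the normal form. -/
theorem wordLength_eq_normalLength [Nonempty ι] {incB : B →* G}
    (he : Function.Injective e) (hof : ∀ i g, e (of i g) = inc i g)
    (hX : ∀ i, Subgroup.closure (X i) = (inc i).range)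
    (hZ : Z = ⋃ i, X i) (hZgen : Subgroup.closure Z = ⊤)
    (hadd : ∀ i b, ∀ u ∈ d.set i,
      wordLength (X i) (inc i (φ i b * u)) = wordLength R (incB b) + wordLength (X i) (inc i u))
    (x : PushoutI φ) :
    wordLength Z (e x) = normalLength (fun i g => wordLength (X i) (inc i g))
      (fun b => wordLength R (incB b)) (NormalWord.equiv (d := d) x) := by
  set len : ∀ i, F i → ℕ := fun i g => wordLength (X i) (inc i g) with hlen
  set lenB : B → ℕ := fun b => wordLength R (incB b) with hlenB
  have hmem : ∀ i (g : F i), inc i g ∈ Subgroup.closure (X i) := fun i g => by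
    rw [hX]; exact ⟨g, rfl⟩
  have h1 : ∀ i, len i 1 = 0 := fun i => by simp only [hlen, map_one, wordLength_one]
  have hsub : ∀ i x y, len i (x * y) ≤ len i x + len i y := fun i x y => by
    simp only [hlen, map_mul]
    exact wordLength_mul_le (hmem i x) (hmem i y)
  have hXZ : ∀ i, X i ⊆ Z := fun i => hZ ▸ Set.subset_iUnion X i
  have htop : ∀ g, g ∈ Subgroup.closure Z := fun g => hZgen ▸ Subgroup.mem_top g
  have hle : ∀ i g, wordLength Z (inc i g) ≤ len i g := fun i g =>
    wordLength_anti (hXZ i) (hmem i g)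
  have hB0 : lenB 1 = 0 := by
    simp only [hlenB, map_one, wordLength_one]
  have e2 : ∀ y : PushoutI φ, (NormalWord.equiv (d := d) y).prod = y :=
    NormalWord.equiv.symm_apply_apply
  apply le_antisymm
  · obtain ⟨w, rfl⟩ : ∃ w : NormalWord d, w.prod = x :=
      ⟨NormalWord.equiv x, NormalWord.equiv.symm_apply_apply x⟩
    have e1 : NormalWord.equiv w.prod = w := NormalWord.equiv.apply_symm_apply w
    rw [e1, NormalWord.prod, map_mul, normalLength]
    refine (wordLength_mul_le (htop _) (htop _)).trans (add_le_add ?_ ?_)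
    · have i := Classical.arbitrary ι
      rw [← of_apply_eq_base φ i, hof]
      refine (hle i _).trans ?_
      have := hadd i w.head 1 (d.one_mem i)
      rw [mul_one, map_one, wordLength_one, add_zero] at this
      exact this.le
    · have : ∀ l : List (Σ i, F i),
          wordLength Z (e (ofCoprodI (l.map fun a => CoprodI.of a.2).prod))
            ≤ (l.map fun a => len a.1 a.2).sum := by
        intro l
        induction l with
        | nil => simp [wordLength_one]
        | cons a l ih =>
          simp only [List.map_cons, List.prod_cons, List.sum_cons, map_mul, ofCoprodI_of, hof]
          exact (wordLength_mul_le (htop _) (htop _)).trans (add_le_add (hle _ _) ih)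
      exact this w.toList
  -- Along a geodesic word for `e x`, each generator adds at most one to `normalLength`.
  · obtain ⟨l, hl, hlZ, hlx⟩ := exists_list_wordLength (htop (e x))
    rw [← hl]
    clear hl
    induction l generalizing x with
    | nil =>
      have : x = 1 := he (by rw [← hlx]; simp)
      subst this
      have : NormalWord.equiv (1 : PushoutI φ) = (NormalWord.empty : NormalWord d) :=
        NormalWord.equiv.eq_symm_apply.1 NormalWord.prod_empty.symm
      rw [this]
      simp [normalLength, lettersLength, hB0]
    | cons a l ih =>
      obtain ⟨i, hi⟩ : ∃ i, a ∈ X i ∪ (X i)⁻¹ := by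
        have := hlZ a List.mem_cons_self
        rw [hZ] at this
        rcases this with h | h
        · obtain ⟨i, hi⟩ := Set.mem_iUnion.mp h
          exact ⟨i, Or.inl hi⟩
        · obtain ⟨i, hi⟩ := Set.mem_iUnion.mp (Set.mem_inv.mp h)
          exact ⟨i, Or.inr hi⟩
      have haX : a ∈ Subgroup.closure (X i) := by
        rcases hi with h | h
        · exact Subgroup.subset_closure h
        · exact (Subgroup.inv_mem_iff _).mp (Subgroup.subset_closure h)
      rw [hX] at haX
      obtain ⟨g, rfl⟩ := haX
      have hg : len i g ≤ 1 := by
        have := wordLength_le_of_list (S := X i) (w := [inc i g]) (by simpa using hi)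
        simpa using this
      have hx : x = of i g * ((of i g)⁻¹ * x) := by group
      have key := ih ((of i g)⁻¹ * x) (fun a ha => hlZ a (List.mem_cons_of_mem _ ha)) (by
        rw [map_mul, map_inv, hof, ← hlx, List.prod_cons, inv_mul_cancel_left])
      have hsm : NormalWord.equiv (d := d) x
          = of (φ := φ) i g • NormalWord.equiv (d := d) ((of i g)⁻¹ * x) := by
        apply NormalWord.prod_injective
        rw [NormalWord.prod_smul, e2, e2]
        exact hx
      rw [hsm, List.length_cons]
      have := normalLength_of_smul_le (lenB := lenB) h1 hsub hadd g
        (NormalWord.equiv (d := d) ((of i g)⁻¹ * x))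
      omega

/-- Growth series form of the length-additive decomposition of the amalgam as (factor `i`) times
`tails d i`. -/
theorem growthSeries_eq_factor_mul [Nonempty ι] {incB : B →* G}
    (he : Function.Bijective e) (hof : ∀ i g, e (of i g) = inc i g)
    (hX : ∀ i, Subgroup.closure (X i) = (inc i).range) (hXfin : ∀ i, (X i).Finite)
    (hZ : Z = ⋃ i, X i) (hZgen : Subgroup.closure Z = ⊤) (hZfin : Z.Finite)
    (hadd : ∀ i b, ∀ u ∈ d.set i,
      wordLength (X i) (inc i (φ i b * u)) = wordLength R (incB b) + wordLength (X i) (inc i u))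
    (i : ι) :
    growthSeries Z Set.univ
      = growthSeries (X i) (inc i).range * growthSeries Z (e '' tails d i) := by
  have hL := wordLength_eq_normalLength he.1 hof hX hZ hZgen hadd
  have hB0 : wordLength R (incB 1) = 0 := by rw [map_one, wordLength_one]
  have hinj : Function.Injective (inc i) := fun g g' h =>
    PushoutI.of_injective d.injective i (he.1 (by rw [hof, hof, h]))
  refine growthSeries_mul
    (finite_wordLength_eq (hXfin i) (by rw [hX]))
    (finite_wordLength_eq hZfin (by rw [hZgen]; exact fun _ _ => trivial)) ⟨?_, ?_, ?_⟩ ?_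
  · exact fun _ _ => trivial
  · rintro ⟨_, _⟩ ⟨⟨g, rfl⟩, ⟨y, hy, rfl⟩⟩ ⟨_, _⟩ ⟨⟨g', rfl⟩, ⟨y', hy', rfl⟩⟩ h
    simp only [← hof, ← map_mul] at h
    obtain ⟨rfl, rfl⟩ := of_mul_tails_inj hy hy' (he.1 h)
    rfl
  · intro x _
    obtain ⟨x, rfl⟩ := he.2 x
    obtain ⟨g, y, hy, rfl⟩ := exists_of_mul_tails d i x
    exact ⟨(inc i g, e y), ⟨⟨g, rfl⟩, ⟨y, hy, rfl⟩⟩, by simp [hof]⟩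
  · rintro _ ⟨g, rfl⟩ _ ⟨y, hy, rfl⟩
    rw [← hof, ← map_mul, hL, hL, hof]
    exact normalLength_of_mul_tails (fun i => by rw [map_one, wordLength_one]) hB0 hadd g hy

/-- Growth series form of the length-additive decomposition of the amalgam as (base group) times
(normal forms with trivial head). -/
theorem growthSeries_eq_base_mul [Nonempty ι] {incB : B →* G}
    (he : Function.Bijective e) (hof : ∀ i g, e (of i g) = inc i g)
    (hbase : ∀ b, e (base φ b) = incB b)
    (hX : ∀ i, Subgroup.closure (X i) = (inc i).range)
    (hR : Subgroup.closure R = incB.range) (hRfin : R.Finite)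
    (hZ : Z = ⋃ i, X i) (hZgen : Subgroup.closure Z = ⊤) (hZfin : Z.Finite)
    (hadd : ∀ i b, ∀ u ∈ d.set i,
      wordLength (X i) (inc i (φ i b * u)) = wordLength R (incB b) + wordLength (X i) (inc i u)) :
    growthSeries Z Set.univ
      = growthSeries R incB.range *
        growthSeries Z (e '' {x | ∃ w : NormalWord d, w.head = 1 ∧ w.prod = x}) := by
  have hL := wordLength_eq_normalLength he.1 hof hX hZ hZgen hadd
  have e1 : ∀ v : NormalWord d, NormalWord.equiv v.prod = v := NormalWord.equiv.apply_symm_apply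
  refine growthSeries_mul
    (finite_wordLength_eq hRfin (by rw [hR]))
    (finite_wordLength_eq hZfin (by rw [hZgen]; exact fun _ _ => trivial)) ⟨?_, ?_, ?_⟩ ?_
  · exact fun _ _ => trivial
  · rintro ⟨_, _⟩ ⟨⟨b, rfl⟩, ⟨_, ⟨⟨w, _, hn⟩, rfl, rfl⟩, rfl⟩⟩
      ⟨_, _⟩ ⟨⟨b', rfl⟩, ⟨_, ⟨⟨w', _, hn'⟩, rfl, rfl⟩, rfl⟩⟩ h
    simp only [← hbase, ← map_mul, ← prod_base_smul] at h
    have h := NormalWord.prod_injective (he.1 h)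
    simp only [base_smul_def', NormalWord.mk.injEq, mul_one] at h
    obtain ⟨rfl, rfl⟩ := h
    rfl
  · intro x _
    obtain ⟨x, rfl⟩ := he.2 x
    obtain ⟨⟨w, b, hn⟩, rfl⟩ : ∃ w : NormalWord d, w.prod = x :=
      ⟨NormalWord.equiv x, NormalWord.equiv.symm_apply_apply x⟩
    refine ⟨(incB b, e (NormalWord.prod ⟨w, 1, hn⟩)), ⟨⟨b, rfl⟩, ⟨_, ⟨_, rfl, rfl⟩, rfl⟩⟩, ?_⟩
    simp [← hbase, NormalWord.prod]
  · rintro _ ⟨b, rfl⟩ _ ⟨_, ⟨⟨w, _, hn⟩, rfl, rfl⟩, rfl⟩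
    rw [← hbase, ← map_mul, ← prod_base_smul, hL, hL, e1, e1, base_smul_def']
    simp [normalLength, hbase, wordLength_one]

end Amalgam

/-! ### Two factors -/

section TwoFactors
open Monoid.PushoutI Monoid.PushoutI.NormalWord Monoid.CoprodI
variable {G : Type*} [Group G] {H K L : Subgroup G}

/-- The inclusions of the two factors into the ambient group. -/
def amalgInc (H K : Subgroup G) : ∀ b : Bool, amalgFactor H K b →* G :=
  fun b => b.rec K.subtype H.subtype

theorem amalgInc_injective (b : Bool) : Function.Injective (amalgInc H K b) := by
  cases b
  · exact K.subtype_injective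
  · exact H.subtype_injective

theorem range_amalgInc (b : Bool) : (amalgInc H K b).range = cond b H K := by
  cases b
  · exact K.range_subtype
  · exact H.range_subtype

theorem amalgInc_comp_base (hLH : L ≤ H) (hLK : L ≤ K) (b : Bool) :
    (amalgInc H K b).comp (amalgBase hLH hLK b) = L.subtype := by
  cases b <;> rfl

theorem amalgBase_injective (hLH : L ≤ H) (hLK : L ≤ K) (b : Bool) :
    Function.Injective (amalgBase hLH hLK b) := by
  refine Function.Injective.of_comp (f := amalgInc H K b) ?_
  rw [← MonoidHom.coe_comp, amalgInc_comp_base]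
  exact L.subtype_injective

theorem amalgLift_of (hLH : L ≤ H) (hLK : L ≤ K) (b : Bool) (g : amalgFactor H K b) :
    amalgLift hLH hLK (of b g) = amalgInc H K b g :=
  PushoutI.lift_of _ _ _ g

theorem amalgLift_base (hLH : L ≤ H) (hLK : L ≤ K) (l : L) :
    amalgLift hLH hLK (base _ l) = L.subtype l :=
  PushoutI.lift_base _ _ _ l

/-- With two factors, a normal form with trivial head misses at least one factor in its first
letter. -/
theorem tails_union {F : Bool → Type*} {B : Type*} [∀ i, Group (F i)] [Group B]
    {φ : ∀ i, B →* F i} (d : Transversal φ) :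
    tails d true ∪ tails d false = {x | ∃ w : NormalWord d, w.head = 1 ∧ w.prod = x} := by
  ext x
  constructor
  · rintro (⟨w, h1, -, h2⟩ | ⟨w, h1, -, h2⟩) <;> exact ⟨w, h1, h2⟩
  · rintro ⟨w, h1, h2⟩
    by_cases h : w.fstIdx = some true
    · exact Or.inr ⟨w, h1, by simp [h], h2⟩
    · exact Or.inl ⟨w, h1, h, h2⟩

theorem tails_inter {F : Bool → Type*} {B : Type*} [∀ i, Group (F i)] [Group B]
    {φ : ∀ i, B →* F i} (d : Transversal φ) :
    tails d true ∩ tails d false = {1} := by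
  ext x
  constructor
  · rintro ⟨⟨w, h1, ht, rfl⟩, ⟨w', h1', hf, h⟩⟩
    obtain rfl := NormalWord.prod_injective h
    have hnone : w'.fstIdx = none := by
      cases hw : w'.fstIdx with
      | none => rfl
      | some b => cases b <;> simp_all
    have : w' = NormalWord.empty := by
      ext1
      · exact h1
      · simpa [Word.fstIdx] using hnone
    rw [this]
    exact NormalWord.prod_empty
  · rintro rfl
    exact ⟨⟨.empty, rfl, by simp [Word.fstIdx, NormalWord.empty, Word.empty], NormalWord.prod_empty⟩,
      ⟨.empty, rfl, by simp [Word.fstIdx, NormalWord.empty, Word.empty], NormalWord.prod_empty⟩⟩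

end TwoFactors

/-- If `G = H *_L K` and `(L,R)` is admissible in both `(H,S)` and `(K,T)`, then
`𝒢_{(G,S∪T)}⁻¹ = 𝒢_{(H,S)}⁻¹ + 𝒢_{(K,T)}⁻¹ − 𝒢_{(L,R)}⁻¹`. -/
theorem growthSeries_inv_amalgam_of_admissible
    {G : Type*} [Group G] (H K L : Subgroup G) (hLH : L ≤ H) (hLK : L ≤ K)
    (hamalg : Function.Bijective (amalgLift hLH hLK))
    (S T R : Set G)
    (hSfin : S.Finite) (hTfin : T.Finite) (hRfin : R.Finite)
    (hSgen : Subgroup.closure S = H) (hTgen : Subgroup.closure T = K)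
    (hRgen : Subgroup.closure R = L)
    (hadmH : Admissible H S L R) (hadmK : Admissible K T L R) :
    Ring.inverse (growthSeries (S ∪ T) (Set.univ : Set G)) =
      Ring.inverse (growthSeries S (H : Set G)) +
      Ring.inverse (growthSeries T (K : Set G)) -
      Ring.inverse (growthSeries R (L : Set G)) := by
  obtain ⟨-, -, U, hU, hU1, hUex, hUadd⟩ := hadmH
  obtain ⟨-, -, V, hV, hV1, hVex, hVadd⟩ := hadmK
  let X : Bool → Set G := fun b => cond b S T
  let W : Bool → Set G := fun b => cond b U V
  let d : PushoutI.NormalWord.Transversal (amalgBase hLH hLK) :=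
    { injective := amalgBase_injective hLH hLK
      set := fun b => amalgInc H K b ⁻¹' W b
      one_mem := fun b => by
        rw [Set.mem_preimage, map_one]
        cases b
        exacts [hV1, hU1]
      compl := fun b => by
        refine isComplement_preimage (amalgInc_injective b) _ ?_ ?_ <;>
          rw [range_amalgInc]
        · cases b
          exacts [hV, hU]
        · rw [amalgInc_comp_base, Subgroup.range_subtype]
          cases b
          exacts [hVex, hUex] }
  have hadd : ∀ b l, ∀ u ∈ d.set b,
      wordLength (X b) (amalgInc H K b (amalgBase hLH hLK b l * u))
        = wordLength R (L.subtype l) + wordLength (X b) (amalgInc H K b u) := by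
    intro b l u hu
    rw [map_mul, ← MonoidHom.comp_apply, amalgInc_comp_base]
    cases b
    exacts [hVadd _ l.2 _ hu, hUadd _ l.2 _ hu]
  have hX : ∀ b, Subgroup.closure (X b) = (amalgInc H K b).range := fun b => by
    rw [range_amalgInc]
    cases b
    exacts [hTgen, hSgen]
  have hXfin : ∀ b, (X b).Finite := by
    rintro (_ | _)
    exacts [hTfin, hSfin]
  have hZ : S ∪ T = ⋃ b, X b := Set.union_eq_iUnion
  have hZgen : Subgroup.closure (S ∪ T) = ⊤ :=
    hZ ▸ closure_iUnion_eq_top hamalg.2 (amalgLift_of hLH hLK) hX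
  have hZfin : (S ∪ T).Finite := hSfin.union hTfin
  have hfac := growthSeries_eq_factor_mul hamalg (amalgLift_of hLH hLK) hX hXfin hZ hZgen hZfin hadd
  have hbase := growthSeries_eq_base_mul hamalg (amalgLift_of hLH hLK) (amalgLift_base hLH hLK) hX
    (by rw [hRgen, Subgroup.range_subtype]) hRfin hZ hZgen hZfin hadd
  have hGH := hfac true
  have hGK := hfac false
  rw [range_amalgInc] at hGH hGK
  rw [Subgroup.range_subtype, ← tails_union, Set.image_union] at hbase
  have hall : ∀ A : Set G, A ⊆ Subgroup.closure (S ∪ T) := fun A _ _ => hZgen ▸ trivial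
  have hie := growthSeries_union_add_inter
    (finite_wordLength_eq hZfin (hall (amalgLift hLH hLK '' tails d true)))
    (finite_wordLength_eq hZfin (hall (amalgLift hLH hLK '' tails d false)))
  rw [← Set.image_inter hamalg.1, tails_inter, Set.image_singleton, map_one,
    growthSeries_singleton_one] at hie
  have uG := isUnit_growthSeries (hall Set.univ) trivial
  have uH := isUnit_growthSeries (S := S) (A := (H : Set G)) (by rw [hSgen]) H.one_mem
  have uK := isUnit_growthSeries (S := T) (A := (K : Set G)) (by rw [hTgen]) K.one_mem
  have uL := isUnit_growthSeries (S := R) (A := (L : Set G)) (by rw [hRgen]) L.one_mem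
  change _ = growthSeries S (H : Set G) * _ at hGH
  change _ = growthSeries T (K : Set G) * _ at hGK
  generalize growthSeries (S ∪ T) (Set.univ : Set G) = g at *
  generalize growthSeries S (H : Set G) = h at *
  generalize growthSeries T (K : Set G) = k at *
  generalize growthSeries R (L : Set G) = l at *
  have ih := Ring.mul_inverse_cancel _ uH
  have ik := Ring.mul_inverse_cancel _ uK
  have il := Ring.mul_inverse_cancel _ uL
  have ig := Ring.mul_inverse_cancel _ uG
  refine uG.mul_left_cancel ?_
  rw [ig, mul_sub, mul_add]
  nth_rewrite 1 [hGH]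
  nth_rewrite 1 [hGK]
  nth_rewrite 1 [hbase]
  -- With `p`, `q` the series of the two sets of tails, the goal is `1 = p + q - (p + q - 1)`.
  linear_combination (-(growthSeries (S ∪ T) (amalgLift hLH hLK '' tails d true))) * ih
    - (growthSeries (S ∪ T) (amalgLift hLH hLK '' tails d false)) * ik
    + (growthSeries (S ∪ T) (amalgLift hLH hLK '' tails d true ∪
        amalgLift hLH hLK '' tails d false)) * il
    + hie
end
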